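/- arXiv:0812.3529 — 3 statements merged into one kernel-verified Lean document; each statement's English description precedes it below -/
import Mathlib

section
/- Fix ε > 0 and n ≥ 1. Let L : ℝ^n × ℝ^n × ℝ → ℝ be continuously differentiable and let x₊, x₋ : ℝ → ℝ^n be continuous. Set y(t) = x₊(t) + x₋(t), v(t) = d⁺_ε x₊(t) + d⁻_ε x₋(t), G(t) = ∂₁L(y(t), v(t), t) and F(t) = ∂₂L(y(t), v(t), t). Then the following are equivalent: (i) for all h₊, h₋ ∈ C_c^∞(ℝ, ℝ^n), ∫_ℝ [G(t)·(h₊(t)+h₋(t)) + F(t)·(d⁺_ε h₊(t)+d⁻_ε h₋(t))] dt = 0; (ii) for every t ∈ ℝ, G(t) = d⁻_ε F(t) and G(t) = d⁺_ε F(t). (This is the general variational theorem: a pair of trajectories is an extremal of the asymmetrically embedded action over all variation pairs if and only if both generalized Euler–Lagrange equations hold.) -/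
open MeasureTheory
open scoped RealInnerProductSpace

noncomputable section

/-- Backward (left) finite difference: `d⁺_ε f t = (f t − f (t − ε)) / ε`. -/
def backwardDiff {n : ℕ} (ε : ℝ) (f : ℝ → EuclideanSpace ℝ (Fin n)) (t : ℝ) :
    EuclideanSpace ℝ (Fin n) :=
  ε⁻¹ • (f t - f (t - ε))

/-- Forward (right) finite difference: `d⁻_ε f t = (f (t + ε) − f t) / ε`. -/
def forwardDiff {n : ℕ} (ε : ℝ) (f : ℝ → EuclideanSpace ℝ (Fin n)) (t : ℝ) :
    EuclideanSpace ℝ (Fin n) :=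
  ε⁻¹ • (f (t + ε) - f t)

/-- `∂₁L(x,v,t)`: gradient of `L` with respect to its first `ℝ^n` argument. -/
def grad1 {n : ℕ} (L : EuclideanSpace ℝ (Fin n) × EuclideanSpace ℝ (Fin n) × ℝ → ℝ)
    (x v : EuclideanSpace ℝ (Fin n)) (t : ℝ) : EuclideanSpace ℝ (Fin n) :=
  gradient (fun y => L (y, v, t)) x

/-- `∂₂L(x,v,t)`: gradient of `L` with respect to its second `ℝ^n` argument. -/
def grad2 {n : ℕ} (L : EuclideanSpace ℝ (Fin n) × EuclideanSpace ℝ (Fin n) × ℝ → ℝ)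
    (x v : EuclideanSpace ℝ (Fin n)) (t : ℝ) : EuclideanSpace ℝ (Fin n) :=
  gradient (fun w => L (x, w, t)) v

open Topology in
theorem aux_cont {n : ℕ} (A : ℝ → EuclideanSpace ℝ (Fin n)) (hA : Continuous A)
    (H : ∀ h : ℝ → EuclideanSpace ℝ (Fin n), ContDiff ℝ (⊤ : ℕ∞) h → HasCompactSupport h →
      ∫ t : ℝ, ⟪A t, h t⟫ = 0) (t : ℝ) : A t = 0 := by
  refine ext_inner_right ℝ (fun w => ?_)
  have hc : Continuous (fun t => ⟪A t, w⟫) := by fun_prop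
  have h1 : ∀ᵐ t : ℝ, ⟪A t, w⟫ = 0 := by
    refine ae_eq_zero_of_integral_contDiff_smul_eq_zero hc.locallyIntegrable ?_
    intro g hg hgc
    have := H (fun t => g t • w) (hg.smul contDiff_const) (hgc.smul_right)
    simpa [inner_smul_right] using this
  have h2 := (Continuous.ae_eq_iff_eq (μ := volume) hc (continuous_const (y := (0:ℝ)))).1 h1
  rw [inner_zero_left]
  exact congrFun h2 t

theorem aux_int {n : ℕ} (A h : ℝ → EuclideanSpace ℝ (Fin n)) (hA : Continuous A)
    (hh : Continuous h) (hc : HasCompactSupport h) : Integrable (fun t => ⟪A t, h t⟫) := by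
  refine Continuous.integrable_of_hasCompactSupport (by fun_prop) ?_
  refine hc.mono ?_
  intro t ht
  simp only [Function.mem_support] at ht ⊢
  intro h0
  exact ht (by simp [h0])

theorem aux_id {n : ℕ} (ε : ℝ) (G F hp hm : ℝ → EuclideanSpace ℝ (Fin n)) (hG : Continuous G)
    (hF : Continuous F) (hpc : Continuous hp) (hps : HasCompactSupport hp)
    (hmc : Continuous hm) (hms : HasCompactSupport hm) :
    (∫ t : ℝ, (⟪G t, hp t + hm t⟫
          + ⟪F t, backwardDiff ε hp t + forwardDiff ε hm t⟫)) =
    (∫ t : ℝ, ⟪G t - forwardDiff ε F t, hp t⟫) + ∫ t : ℝ, ⟪G t - backwardDiff ε F t, hm t⟫ := by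
  have iGp := aux_int G hp hG hpc hps
  have iGm := aux_int G hm hG hmc hms
  have iFp := aux_int F hp hF hpc hps
  have iFm := aux_int F hm hF hmc hms
  have jp := aux_int (fun t => F (t + ε)) hp (by fun_prop) hpc hps
  have jm := aux_int (fun t => F (t - ε)) hm (by fun_prop) hmc hms
  have kp : Integrable (fun t => ⟪F t, hp (t - ε)⟫) := by
    simpa using jp.comp_sub_right ε
  have km : Integrable (fun t => ⟪F t, hm (t + ε)⟫) := by
    simpa using jm.comp_add_right ε
  have ep : ∫ t, ⟪F t, hp (t - ε)⟫ = ∫ t, ⟪F (t + ε), hp t⟫ := by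
    simpa using integral_sub_right_eq_self (μ := volume) (fun t => ⟪F (t + ε), hp t⟫) ε
  have em : ∫ t, ⟪F t, hm (t + ε)⟫ = ∫ t, ⟪F (t - ε), hm t⟫ := by
    simpa using integral_add_right_eq_self (μ := volume) (fun t => ⟪F (t - ε), hm t⟫) ε
  have e1 : (∫ t : ℝ, (⟪G t, hp t + hm t⟫
          + ⟪F t, backwardDiff ε hp t + forwardDiff ε hm t⟫)) =
      ∫ t, ((⟪G t, hp t⟫ + ⟪G t, hm t⟫) + ε⁻¹ * ((⟪F t, hp t⟫ - ⟪F t, hp (t - ε)⟫)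
        + (⟪F t, hm (t + ε)⟫ - ⟪F t, hm t⟫))) := by
    congr 1; ext t
    simp only [backwardDiff, forwardDiff, inner_add_right, inner_sub_right, real_inner_smul_right]
    ring
  have e2 : (∫ t : ℝ, ⟪G t - forwardDiff ε F t, hp t⟫) =
      ∫ t, (⟪G t, hp t⟫ - ε⁻¹ * (⟪F (t + ε), hp t⟫ - ⟪F t, hp t⟫)) := by
    congr 1; ext t
    simp only [forwardDiff, inner_sub_left, real_inner_smul_left]
  have e3 : (∫ t : ℝ, ⟪G t - backwardDiff ε F t, hm t⟫) =
      ∫ t, (⟪G t, hm t⟫ - ε⁻¹ * (⟪F t, hm t⟫ - ⟪F (t - ε), hm t⟫)) := by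
    congr 1; ext t
    simp only [backwardDiff, inner_sub_left, real_inner_smul_left]
  rw [e1, e2, e3, integral_add (by fun_prop) (by fun_prop),
    integral_add iGp iGm, integral_const_mul, integral_add (by fun_prop) (by fun_prop),
    integral_sub iFp kp, integral_sub km iFm, integral_sub iGp (by fun_prop),
    integral_sub iGm (by fun_prop), integral_const_mul, integral_const_mul,
    integral_sub jp iFp, integral_sub iFm jm, ep, em]
  ring

theorem aux_grad1 {n : ℕ} (L : EuclideanSpace ℝ (Fin n) × EuclideanSpace ℝ (Fin n) × ℝ → ℝ)
    (hL : ContDiff ℝ 1 L) (y v : ℝ → EuclideanSpace ℝ (Fin n)) (hy : Continuous y)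
    (hv : Continuous v) : Continuous (fun t => grad1 L (y t) (v t) t) := by
  have key : ∀ t, grad1 L (y t) (v t) t = (InnerProductSpace.toDual ℝ _).symm
      ((fderiv ℝ L (y t, v t, t)).comp (ContinuousLinearMap.inl ℝ _ _)) := by
    intro t
    unfold grad1 gradient
    congr 1
    have h1 : HasFDerivAt L (fderiv ℝ L (y t, v t, t)) (y t, v t, t) :=
      (hL.differentiable one_ne_zero _).hasFDerivAt
    exact (h1.comp (y t) (hasFDerivAt_prodMk_left (y t) (v t, t))).fderiv
  simp only [key]
  have hd := hL.continuous_fderiv one_ne_zero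
  refine (LinearIsometryEquiv.continuous _).comp ?_
  exact (hd.comp (by fun_prop : Continuous fun t => (y t, v t, t))).clm_comp continuous_const

theorem aux_grad2 {n : ℕ} (L : EuclideanSpace ℝ (Fin n) × EuclideanSpace ℝ (Fin n) × ℝ → ℝ)
    (hL : ContDiff ℝ 1 L) (y v : ℝ → EuclideanSpace ℝ (Fin n)) (hy : Continuous y)
    (hv : Continuous v) : Continuous (fun t => grad2 L (y t) (v t) t) := by
  have key : ∀ t, grad2 L (y t) (v t) t = (InnerProductSpace.toDual ℝ _).symm
      ((fderiv ℝ L (y t, v t, t)).comp ((ContinuousLinearMap.inr ℝ _ _).comp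
        (ContinuousLinearMap.inl ℝ _ _))) := by
    intro t
    unfold grad2 gradient
    congr 1
    have h1 : HasFDerivAt L (fderiv ℝ L (y t, v t, t)) (y t, v t, t) :=
      (hL.differentiable one_ne_zero _).hasFDerivAt
    exact (h1.comp (v t) ((hasFDerivAt_prodMk_right (y t) (v t, t)).comp (v t)
      (hasFDerivAt_prodMk_left (v t) t))).fderiv
  simp only [key]
  have hd := hL.continuous_fderiv one_ne_zero
  refine (LinearIsometryEquiv.continuous _).comp ?_
  exact (hd.comp (by fun_prop : Continuous fun t => (y t, v t, t))).clm_comp continuous_const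

/-- general variational theorem. With `y = x₊ + x₋`,
`v = d⁺_ε x₊ + d⁻_ε x₋`, `G = ∂₁L(y,v,·)`, `F = ∂₂L(y,v,·)`, the pair `(x₊,x₋)`
is an extremal of the asymmetrically embedded action over all variation pairs
`(h₊,h₋) ∈ C_c^∞ × C_c^∞` if and only if both generalized Euler–Lagrange
equations `G = d⁻_ε F` and `G = d⁺_ε F` hold everywhere. -/
theorem asymmetric_extremal_iff_both_euler_lagrange
    (ε : ℝ) (hε : 0 < ε) (n : ℕ) (hn : 1 ≤ n)
    (L : EuclideanSpace ℝ (Fin n) × EuclideanSpace ℝ (Fin n) × ℝ → ℝ)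
    (hL : ContDiff ℝ 1 L)
    (xp xm : ℝ → EuclideanSpace ℝ (Fin n)) (hxp : Continuous xp) (hxm : Continuous xm)
    (y : ℝ → EuclideanSpace ℝ (Fin n)) (hy : y = fun t => xp t + xm t)
    (v : ℝ → EuclideanSpace ℝ (Fin n))
    (hv : v = fun t => backwardDiff ε xp t + forwardDiff ε xm t)
    (G : ℝ → EuclideanSpace ℝ (Fin n)) (hG : G = fun t => grad1 L (y t) (v t) t)
    (F : ℝ → EuclideanSpace ℝ (Fin n)) (hF : F = fun t => grad2 L (y t) (v t) t) :
    (∀ hp hm : ℝ → EuclideanSpace ℝ (Fin n),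
        ContDiff ℝ (⊤ : ℕ∞) hp → HasCompactSupport hp →
        ContDiff ℝ (⊤ : ℕ∞) hm → HasCompactSupport hm →
        (∫ t : ℝ, (⟪G t, hp t + hm t⟫
          + ⟪F t, backwardDiff ε hp t + forwardDiff ε hm t⟫)) = 0) ↔
    (∀ t : ℝ, G t = forwardDiff ε F t ∧ G t = backwardDiff ε F t) := by
  have hyc : Continuous y := by rw [hy]; fun_prop
  have hvc : Continuous v := by rw [hv]; unfold backwardDiff forwardDiff; fun_prop
  have hGc : Continuous G := by rw [hG]; exact aux_grad1 L hL y v hyc hvc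
  have hFc : Continuous F := by rw [hF]; exact aux_grad2 L hL y v hyc hvc
  constructor
  · intro H t
    have c0 : ContDiff ℝ (⊤ : ℕ∞) (fun _ : ℝ => (0 : EuclideanSpace ℝ (Fin n))) := contDiff_const
    have s0 : HasCompactSupport (fun _ : ℝ => (0 : EuclideanSpace ℝ (Fin n))) :=
      HasCompactSupport.zero
    constructor
    · refine sub_eq_zero.1 (aux_cont (fun t => G t - forwardDiff ε F t)
        (by unfold forwardDiff; fun_prop) (fun h hc hs => ?_) t)
      have := H h _ hc hs c0 s0
      rw [aux_id ε G F _ _ hGc hFc hc.continuous hs c0.continuous s0] at this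
      simpa using this
    · refine sub_eq_zero.1 (aux_cont (fun t => G t - backwardDiff ε F t)
        (by unfold backwardDiff; fun_prop) (fun h hc hs => ?_) t)
      have := H _ h c0 s0 hc hs
      rw [aux_id ε G F _ _ hGc hFc c0.continuous s0 hc.continuous hs] at this
      simpa using this
  · intro H hp hm cp sp cm sm
    rw [aux_id ε G F _ _ hGc hFc cp.continuous sp cm.continuous sm]
    have z1 : ∀ t, G t - forwardDiff ε F t = 0 := fun t => sub_eq_zero.2 (H t).1
    have z2 : ∀ t, G t - backwardDiff ε F t = 0 := fun t => sub_eq_zero.2 (H t).2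
    simp [z1, z2]

end
end

section
/- Fix ε > 0 and n ≥ 1. Let L : ℝ^n × ℝ^n × ℝ → ℝ be continuously differentiable and x : ℝ → ℝ^n continuous. Set G(t) = ∂₁L(x(t), d⁺_ε x(t), t) and F(t) = ∂₂L(x(t), d⁺_ε x(t), t). Then the following are equivalent: (i) for every h ∈ C_c^∞(ℝ, ℝ^n), ∫_ℝ [G(t)·h(t) + F(t)·d⁻_ε h(t)] dt = 0; (ii) for every t ∈ ℝ, G(t) = d⁺_ε F(t). (This is the causal Euler–Lagrange equation in the direction past → future, obtained from variations evolving in the opposite temporal direction.) -/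
open MeasureTheory
open scoped RealInnerProductSpace

noncomputable section

lemma grad1_cont {n : ℕ} (L : EuclideanSpace ℝ (Fin n) × EuclideanSpace ℝ (Fin n) × ℝ → ℝ)
    (hL : ContDiff ℝ 1 L) (x v : ℝ → EuclideanSpace ℝ (Fin n)) (hx : Continuous x)
    (hv : Continuous v) : Continuous (fun t => grad1 L (x t) (v t) t) := by
  have h1 : ∀ t, fderiv ℝ (fun y => L (y, v t, t)) (x t) =
      (fderiv ℝ L (x t, v t, t)).comp (ContinuousLinearMap.inl ℝ _ _) := by
    intro t
    have hd := (hL.differentiable one_ne_zero (x t, v t, t)).hasFDerivAt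
    exact (hd.comp (x t) (hasFDerivAt_prodMk_left (x t) (v t, t))).fderiv
  unfold grad1 gradient
  simp only [h1]
  have h2 := hL.continuous_fderiv one_ne_zero
  have h3 : Continuous (fun t => fderiv ℝ L (x t, v t, t)) := h2.comp (by fun_prop)
  exact (LinearIsometryEquiv.continuous _).comp (h3.clm_comp continuous_const)

lemma grad2_cont {n : ℕ} (L : EuclideanSpace ℝ (Fin n) × EuclideanSpace ℝ (Fin n) × ℝ → ℝ)
    (hL : ContDiff ℝ 1 L) (x v : ℝ → EuclideanSpace ℝ (Fin n)) (hx : Continuous x)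
    (hv : Continuous v) : Continuous (fun t => grad2 L (x t) (v t) t) := by
  have h1 : ∀ t, fderiv ℝ (fun y => L (x t, y, t)) (v t) =
      (fderiv ℝ L (x t, v t, t)).comp ((ContinuousLinearMap.inr ℝ _ _).comp
        (ContinuousLinearMap.inl ℝ _ _)) := by
    intro t
    have hd := (hL.differentiable one_ne_zero (x t, v t, t)).hasFDerivAt
    exact (hd.comp (v t) ((hasFDerivAt_prodMk_right (x t) (v t, t)).comp (v t)
      (hasFDerivAt_prodMk_left (v t) t))).fderiv
  unfold grad2 gradient
  simp only [h1]
  have h2 := hL.continuous_fderiv one_ne_zero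
  have h3 : Continuous (fun t => fderiv ℝ L (x t, v t, t)) := h2.comp (by fun_prop)
  exact (LinearIsometryEquiv.continuous _).comp (h3.clm_comp continuous_const)

lemma backwardDiff_cont {n : ℕ} (ε : ℝ) (x : ℝ → EuclideanSpace ℝ (Fin n)) (hx : Continuous x) :
    Continuous (backwardDiff ε x) := by
  unfold backwardDiff; fun_prop

lemma inner_integrable {n : ℕ} (F h : ℝ → EuclideanSpace ℝ (Fin n)) (hF : Continuous F)
    (hh : Continuous h) (hc : HasCompactSupport h) : Integrable (fun t => ⟪F t, h t⟫) := by
  apply Continuous.integrable_of_hasCompactSupport (by fun_prop)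
  apply hc.mono
  intro t ht h0
  apply ht
  simp only [h0, inner_zero_right]

lemma key {n : ℕ} (ε : ℝ) (G F h : ℝ → EuclideanSpace ℝ (Fin n)) (hG : Continuous G)
    (hF : Continuous F) (hh : Continuous h) (hc : HasCompactSupport h) :
    (∫ t : ℝ, (⟪G t, h t⟫ + ⟪F t, forwardDiff ε h t⟫)) =
      ∫ t : ℝ, ⟪G t - backwardDiff ε F t, h t⟫ := by
  have i1 := inner_integrable G h hG hh hc
  have i2 := inner_integrable F h hF hh hc
  have i3 := inner_integrable (fun t => F (t - ε)) h (by fun_prop) hh hc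
  have i4 : Integrable (fun t => ⟪F t, h (t + ε)⟫) := by
    have := i3.comp_add_right ε
    simpa using this
  have e : ∫ t, ⟪F t, h (t + ε)⟫ = ∫ t, ⟪F (t - ε), h t⟫ := by
    have := integral_add_right_eq_self (μ := volume) (fun t => (⟪F (t - ε), h t⟫ : ℝ)) ε
    simpa using this
  simp only [forwardDiff, backwardDiff, inner_sub_left, inner_sub_right, inner_smul_left,
    inner_smul_right, RCLike.conj_to_real]
  have j1 : Integrable (fun t => ε⁻¹ * ((⟪F t, h (t + ε)⟫ : ℝ) - ⟪F t, h t⟫)) :=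
    (i4.sub i2).const_mul _
  have j2 : Integrable (fun t => ε⁻¹ * ((⟪F t, h t⟫ : ℝ) - ⟪F (t - ε), h t⟫)) :=
    (i2.sub i3).const_mul _
  rw [integral_add i1 j1, integral_sub i1 j2,
    integral_const_mul, integral_const_mul, integral_sub i4 i2, integral_sub i2 i3, e]
  ring

/-- causal Euler–Lagrange equation in the direction past → future.
With `G = ∂₁L(x, d⁺_ε x, ·)` and `F = ∂₂L(x, d⁺_ε x, ·)`, the trajectory is an
extremal with respect to variations evolving in the opposite temporal direction
(i.e. entering via `d⁻_ε h`) if and only if `G = d⁺_ε F` everywhere. -/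
theorem causal_euler_lagrange_forward
    (ε : ℝ) (hε : 0 < ε) (n : ℕ) (hn : 1 ≤ n)
    (L : EuclideanSpace ℝ (Fin n) × EuclideanSpace ℝ (Fin n) × ℝ → ℝ)
    (hL : ContDiff ℝ 1 L)
    (x : ℝ → EuclideanSpace ℝ (Fin n)) (hx : Continuous x)
    (G : ℝ → EuclideanSpace ℝ (Fin n))
    (hG : G = fun t => grad1 L (x t) (backwardDiff ε x t) t)
    (F : ℝ → EuclideanSpace ℝ (Fin n))
    (hF : F = fun t => grad2 L (x t) (backwardDiff ε x t) t) :
    (∀ h : ℝ → EuclideanSpace ℝ (Fin n),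
        ContDiff ℝ (⊤ : ℕ∞) h → HasCompactSupport h →
        (∫ t : ℝ, (⟪G t, h t⟫ + ⟪F t, forwardDiff ε h t⟫)) = 0) ↔
    (∀ t : ℝ, G t = backwardDiff ε F t) := by
  have hb := backwardDiff_cont ε x hx
  have cG : Continuous G := hG ▸ grad1_cont L hL x _ hx hb
  have cF : Continuous F := hF ▸ grad2_cont L hL x _ hx hb
  have cB := backwardDiff_cont ε F cF
  constructor
  · intro H t
    rw [← sub_eq_zero]
    apply ext_inner_right ℝ
    intro v
    rw [inner_zero_left]
    have cD : Continuous (fun t => (⟪G t - backwardDiff ε F t, v⟫ : ℝ)) := by fun_prop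
    have ae := ae_eq_zero_of_integral_contDiff_smul_eq_zero (μ := volume)
      cD.locallyIntegrable (by
        intro g hg hgc
        have h1 := H (fun t => g t • v) (hg.smul contDiff_const) (hgc.smul_right)
        rw [key ε G F (fun t => g t • v) cG cF (hg.continuous.smul continuous_const) hgc.smul_right] at h1
        simpa only [inner_smul_right, smul_eq_mul] using h1)
    have := Continuous.ae_eq_iff_eq volume cD continuous_const |>.1 ae
    exact congrFun this t
  · intro H h hh hc
    rw [key ε G F h cG cF hh.continuous hc]
    simp [← H]

end
end

section
/- Fix ε > 0 and n ≥ 1. Let L : ℝ^n × ℝ^n × ℝ → ℝ be continuously differentiable and x : ℝ → ℝ^n continuous. Set G(t) = ∂₁L(x(t), d⁻_ε x(t), t) and F(t) = ∂₂L(x(t), d⁻_ε x(t), t). Then the following are equivalent: (i) for every h ∈ C_c^∞(ℝ, ℝ^n), ∫_ℝ [G(t)·h(t) + F(t)·d⁺_ε h(t)] dt = 0; (ii) for every t ∈ ℝ, G(t) = d⁻_ε F(t). (This is the Euler–Lagrange equation causal in the direction future → past, obtained from variations evolving in the direction past → future.) -/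
open MeasureTheory
open scoped RealInnerProductSpace

noncomputable section

theorem aux_grad1_eq {n : ℕ} (L : EuclideanSpace ℝ (Fin n) × EuclideanSpace ℝ (Fin n) × ℝ → ℝ)
    (hL : ContDiff ℝ 1 L) (x v : EuclideanSpace ℝ (Fin n)) (t : ℝ) :
    grad1 L x v t = (InnerProductSpace.toDual ℝ _).symm
      ((fderiv ℝ L (x, v, t)).comp (ContinuousLinearMap.inl ℝ _ _)) := by
  unfold grad1 gradient
  congr 1
  have h1 : HasFDerivAt L (fderiv ℝ L (x, v, t)) (x, v, t) :=
    (hL.differentiable one_ne_zero _).hasFDerivAt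
  exact (HasFDerivAt.comp x h1 (hasFDerivAt_prodMk_left x (v, t))).fderiv

theorem aux_grad2_eq {n : ℕ} (L : EuclideanSpace ℝ (Fin n) × EuclideanSpace ℝ (Fin n) × ℝ → ℝ)
    (hL : ContDiff ℝ 1 L) (x v : EuclideanSpace ℝ (Fin n)) (t : ℝ) :
    grad2 L x v t = (InnerProductSpace.toDual ℝ _).symm
      ((fderiv ℝ L (x, v, t)).comp ((ContinuousLinearMap.inr ℝ _ _).comp
        (ContinuousLinearMap.inl ℝ _ _))) := by
  unfold grad2 gradient
  congr 1
  have h1 : HasFDerivAt L (fderiv ℝ L (x, v, t)) (x, v, t) :=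
    (hL.differentiable one_ne_zero _).hasFDerivAt
  exact (HasFDerivAt.comp v h1
    ((hasFDerivAt_prodMk_right x (v, t)).comp v (hasFDerivAt_prodMk_left v t))).fderiv

theorem aux_integral {n : ℕ} (ε : ℝ) (G F h : ℝ → EuclideanSpace ℝ (Fin n))
    (hG : Continuous G) (hF : Continuous F) (hh : Continuous h) (hc : HasCompactSupport h) :
    (∫ t : ℝ, (⟪G t, h t⟫ + ⟪F t, backwardDiff ε h t⟫))
      = ∫ t : ℝ, ⟪G t - forwardDiff ε F t, h t⟫ := by
  have key : ∀ A : ℝ → EuclideanSpace ℝ (Fin n), Continuous A →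
      Integrable (fun t => ⟪A t, h t⟫) := by
    intro A hA
    refine (hA.inner hh).integrable_of_hasCompactSupport ?_
    refine hc.mono ?_
    intro t ht h0
    apply ht
    simp [h0]
  have i1 := key G hG
  have i2 := key F hF
  have i3 := key (fun t => F (t + ε)) (by fun_prop)
  have i4 : Integrable (fun t => ⟪F t, h (t - ε)⟫) := by
    simpa using i3.comp_sub_right ε
  have e : (∫ t, ⟪F t, h (t - ε)⟫) = ∫ t, ⟪F (t + ε), h t⟫ := by
    have := integral_sub_right_eq_self (μ := volume) (fun t => ⟪F (t + ε), h t⟫) ε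
    simpa using this
  have l : ∀ t, ⟪G t, h t⟫ + ⟪F t, backwardDiff ε h t⟫
      = ⟪G t, h t⟫ + ε⁻¹ * (⟪F t, h t⟫ - ⟪F t, h (t - ε)⟫) := by
    intro t
    simp only [backwardDiff, inner_smul_right, inner_sub_right]
  have r : ∀ t, ⟪G t - forwardDiff ε F t, h t⟫
      = ⟪G t, h t⟫ - ε⁻¹ * (⟪F (t + ε), h t⟫ - ⟪F t, h t⟫) := by
    intro t
    simp only [forwardDiff, real_inner_smul_left, inner_sub_left]
  have i5 : Integrable (fun t => ε⁻¹ * (⟪F t, h t⟫ - ⟪F t, h (t - ε)⟫)) :=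
    (i2.sub i4).const_mul _
  have i6 : Integrable (fun t => ε⁻¹ * (⟪F (t + ε), h t⟫ - ⟪F t, h t⟫)) :=
    (i3.sub i2).const_mul _
  simp_rw [l, r]
  rw [integral_add i1 i5, integral_sub i1 i6,
    integral_const_mul, integral_const_mul, integral_sub i2 i4, integral_sub i3 i2, e]
  ring

/-- Euler–Lagrange equation causal in the direction future → past,
obtained from variations evolving in the direction past → future.
With `G = ∂₁L(x, d⁻_ε x, ·)` and `F = ∂₂L(x, d⁻_ε x, ·)`, the trajectory is an
extremal with respect to variations entering via `d⁺_ε h` if and only if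
`G = d⁻_ε F` everywhere. -/
theorem causal_euler_lagrange_backward
    (ε : ℝ) (hε : 0 < ε) (n : ℕ) (hn : 1 ≤ n)
    (L : EuclideanSpace ℝ (Fin n) × EuclideanSpace ℝ (Fin n) × ℝ → ℝ)
    (hL : ContDiff ℝ 1 L)
    (x : ℝ → EuclideanSpace ℝ (Fin n)) (hx : Continuous x)
    (G : ℝ → EuclideanSpace ℝ (Fin n))
    (hG : G = fun t => grad1 L (x t) (forwardDiff ε x t) t)
    (F : ℝ → EuclideanSpace ℝ (Fin n))
    (hF : F = fun t => grad2 L (x t) (forwardDiff ε x t) t) :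
    (∀ h : ℝ → EuclideanSpace ℝ (Fin n),
        ContDiff ℝ (⊤ : ℕ∞) h → HasCompactSupport h →
        (∫ t : ℝ, (⟪G t, h t⟫ + ⟪F t, backwardDiff ε h t⟫)) = 0) ↔
    (∀ t : ℝ, G t = forwardDiff ε F t) := by
  have hfx : Continuous (forwardDiff ε x) := by unfold forwardDiff; fun_prop
  have hp : Continuous (fun t => fderiv ℝ L (x t, forwardDiff ε x t, t)) :=
    (hL.continuous_fderiv one_ne_zero).comp (hx.prodMk (hfx.prodMk continuous_id))
  have cG : Continuous G := by
    rw [hG]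
    simp_rw [aux_grad1_eq L hL]
    exact (LinearIsometryEquiv.continuous _).comp (hp.clm_comp continuous_const)
  have cF : Continuous F := by
    rw [hF]
    simp_rw [aux_grad2_eq L hL]
    exact (LinearIsometryEquiv.continuous _).comp (hp.clm_comp continuous_const)
  have cD : Continuous (forwardDiff ε F) := by unfold forwardDiff; fun_prop
  constructor
  · intro H t
    rw [← sub_eq_zero]
    refine ext_inner_right ℝ fun v => ?_
    rw [inner_zero_left]
    have cK : Continuous (fun t => ⟪G t - forwardDiff ε F t, v⟫) :=
      (cG.sub cD).inner continuous_const
    have ae := ae_eq_zero_of_integral_contDiff_smul_eq_zero (μ := volume)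
      (cK.locallyIntegrable) (fun g hg hgc => by
        have hs : ContDiff ℝ (⊤ : ℕ∞) (fun t => g t • v) := hg.smul contDiff_const
        have hcs : HasCompactSupport (fun t => g t • v) := hgc.smul_right
        have := H _ hs hcs
        rw [aux_integral ε G F _ cG cF hs.continuous hcs] at this
        simpa only [real_inner_smul_right, smul_eq_mul] using this)
    have := Continuous.ae_eq_iff_eq (μ := (volume : Measure ℝ)) cK continuous_const |>.1 ae
    exact congrFun this t
  · intro H h hh hc
    rw [aux_integral ε G F h cG cF hh.continuous hc]
    simp [← H]

end
end
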